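/- Let q ≥ 2 and t ≥ 2 be fixed integers such that either t < q, or q is even and t < 2q. Then there exists a constant K depending only on q and t such that for all sufficiently large n there exists a code C ⊆ Σ_q^n that is a (≤t)-burst-deletion correcting code and has redundancy log₂(q^n/|C|) ≤ log₂ n + (t−1)·log₂ log₂ n + K. -/

import Mathlib

/-!
The code is a largest class of words with a common key, where the key takes `O(n log n)` values;
this gives redundancy `log₂ n + log₂ log₂ n + O(1)`, which suffices because `t ≥ 2`.

Let `x ≠ z` have a common descendant. The deleted bursts have the same length `1 ≤ τ ≤ t`, and if the
sites are `i ≤ j`, then `x` and `z` agree before `i` and from `j + τ` on, while `z_k = x_{k+τ}` in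
between. The key rules this out in two steps.

*Marks.* To every word one attaches a set of marked places, in the manner of Krieger's marker lemma
(`Mark`): marks are determined locally, commute with shifts (`mark_local`), are at distance at least
`2t` (`mark_sparse`), and a stretch without marks is `D`-periodic for `D = (2t)!` (`eq_of_no_mark`).
Let `f` and `g` count the marks of `x` and `z` before a given place. The key contains the number of
marks and, for `A` a set of residues, the size of `{k : f k mod J₀ ∈ A}` modulo `t + 1`, both of
bounded range, together with `∑ f` modulo some `M₀ = O(n)`. If `j - i` is large, equality of these
data leaves no mark between the sites (`no_marks`), so both words are `D`-periodic there.

*Lags.* Let `y_k = x_k - x_{k+D}`, lifted to `{0, …, q - 1}`. The lags of `x` and `z` then differ only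
in two clusters of bounded length near the sites (in one cluster if `j - i` is bounded). Restricting
to words without a `D`-periodic stretch of length `P = log₂ n + O(1)`, which costs at most half of
all words (`exists_good`), the distance of the clusters is `O(log n)`. The key contains the sums of
`y` over the residue classes modulo a constant `J`, taken modulo `2q`, and `∑ q^(k mod J) k y_k` modulo
some `M₂ = O(log n)`. By `two_clusters` these determine `y`, and `y` determines the word, read from
right to left (`conflict_eq`).
-/

/-- The `(≤ t)`-burst-deletion ball: all sequences obtained from `x` by deleting a
substring of consecutive symbols of length at most `t`. -/
def ballLE {q : ℕ} (t : ℕ) (x : List (ZMod q)) : Set (List (ZMod q)) :=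
  {y | ∃ i t' : ℕ, t' ≤ t ∧ i + t' ≤ x.length ∧ y = x.take i ++ x.drop (i + t')}

/-! ### Sparse local marks -/

namespace BurstCode

/-- The window of `X` of length `ℓ` starting at `k` has no period `π` with `1 ≤ π < S`. -/
def NonPer {A : Type*} (S ℓ : ℕ) (X : ℤ → A) (k : ℤ) : Prop :=
  ∀ π : ℕ, 1 ≤ π → π < S → ∃ u : ℕ, u + π < ℓ ∧ X (k + u) ≠ X (k + u + π)

/-- The marks of `X`, placed greedily in stages. Windows of length `ℓ` are numbered by `code`; at stage
`s` a place `k` is marked if its window has number `s`, has no period below `S`, and no place closer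
than `S` is already marked. `Mark S ℓ code s X k` says that `k` is marked during the stages
before `s`. -/
def Mark {A : Type*} (S ℓ : ℕ) (code : (Fin ℓ → A) → ℕ) : ℕ → (ℤ → A) → ℤ → Prop
  | 0, _, _ => False
  | s + 1, X, k => Mark S ℓ code s X k ∨
      (code (fun u => X (k + (u : ℕ))) = s ∧ NonPer S ℓ X k ∧
        ∀ h : ℤ, |h| < S → ¬ Mark S ℓ code s X (k + h))

variable {A : Type*} {S ℓ : ℕ} {code : (Fin ℓ → A) → ℕ}

/-- Distinct marks are at distance at least `S`: two places marked at the same stage carry equal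
windows, so that a smaller distance would be a forbidden period. -/
lemma mark_sparse (hcode : Function.Injective code) (X : ℤ → A) (s : ℕ) :
    ∀ k k' : ℤ, Mark S ℓ code s X k → Mark S ℓ code s X k' → k < k' → k + S ≤ k' := by
  induction s with
  | zero => intro k k' h; exact h.elim
  | succ s ih =>
    intro k k' hk hk' hlt
    by_contra hcon
    push Not at hcon
    rcases hk with hk | ⟨hc, hn, hfar⟩ <;> rcases hk' with hk' | ⟨hc', hn', hfar'⟩
    · have := ih k k' hk hk' hlt; omega
    · apply hfar' (k - k') (by rw [abs_lt]; constructor <;> omega)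
      rwa [show k' + (k - k') = k by ring]
    · apply hfar (k' - k) (by rw [abs_lt]; constructor <;> omega)
      rwa [show k + (k' - k) = k' by ring]
    · -- equal codes at distance `< S` force a short period of the window
      have hw := hcode (hc.trans hc'.symm)
      obtain ⟨u, hu, hne⟩ := hn (k' - k).toNat (by omega) (by omega)
      apply hne
      have h1 := congrFun hw ⟨u, by omega⟩
      simp only at h1
      rw [h1]
      congr 1
      rw [Int.toNat_of_nonneg (by omega)]
      ring

lemma nonPer_congr (X X' : ℤ → A) (τ k : ℤ)
    (h : ∀ v : ℤ, k ≤ v → v ≤ k + ℓ → X' v = X (v + τ)) :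
    NonPer S ℓ X' k ↔ NonPer S ℓ X (k + τ) := by
  unfold NonPer
  refine forall_congr' fun π => forall_congr' fun _ => forall_congr' fun _ =>
    exists_congr fun u => and_congr_right fun hu => ?_
  rw [h (k + u) (by omega) (by omega), h (k + u + π) (by omega) (by omega),
    show k + u + τ = k + τ + u by ring, show k + u + π + τ = k + τ + u + π by ring]

/-- Whether `k` is marked depends only on the symbols within distance `s * S + ℓ` of `k`, and in a
shift-equivariant way. -/
lemma mark_local (s : ℕ) : ∀ (X X' : ℤ → A) (τ k : ℤ),
    (∀ v : ℤ, k - ((s * S + ℓ : ℕ) : ℤ) ≤ v → v ≤ k + ((s * S + ℓ : ℕ) : ℤ) → X' v = X (v + τ)) →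
    (Mark S ℓ code s X' k ↔ Mark S ℓ code s X (k + τ)) := by
  induction s with
  | zero => intro X X' τ k _; exact Iff.rfl
  | succ s ih =>
    intro X X' τ k h
    have e : (((s + 1) * S + ℓ : ℕ) : ℤ) = ((s * S + ℓ : ℕ) : ℤ) + S := by push_cast; ring
    rw [e] at h
    have hpos : (0 : ℤ) ≤ (s * S : ℕ) := by positivity
    have e2 : ((s * S + ℓ : ℕ) : ℤ) = ((s * S : ℕ) : ℤ) + ℓ := by push_cast; ring
    have hS : (0 : ℤ) ≤ S := by positivity
    simp only [Mark]
    refine or_congr (ih X X' τ k fun v h1 h2 => h v (by omega) (by omega)) ?_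
    refine and_congr ?_ (and_congr ?_ ?_)
    · have : (fun u : Fin ℓ => X' (k + (u : ℕ))) = fun u : Fin ℓ => X (k + τ + (u : ℕ)) := by
        funext u
        have := u.2
        rw [h (k + (u : ℕ)) (by omega) (by omega)]
        congr 1; ring
      rw [this]
    · exact nonPer_congr X X' τ k fun v h1 h2 => h v (by omega) (by omega)
    · refine forall_congr' fun d => forall_congr' fun hd => not_congr ?_
      rw [abs_lt] at hd
      rw [ih X X' τ (k + d) fun v h1 h2 => h v (by omega) (by omega),
        show k + d + τ = k + τ + d by ring]

lemma mark_mono (X : ℤ → A) (k : ℤ) {s s' : ℕ} (h : s ≤ s') :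
    Mark S ℓ code s X k → Mark S ℓ code s' X k := by
  induction h with
  | refl => exact id
  | step _ ih => exact fun hm => Or.inl (ih hm)

/-- Once all stages are done, a place far from every mark has a window with a period `π < S`; as
`π ∣ D` and `D < ℓ`, the symbols at distance `D` agree. -/
lemma eq_of_no_mark {Q D : ℕ} (hQ : ∀ w, code w < Q) (hD : ∀ π : ℕ, 1 ≤ π → π < S → π ∣ D)
    (hℓ : D < ℓ) (X : ℤ → A) (k : ℤ)
    (hno : ∀ h : ℤ, |h| < S → ¬ Mark S ℓ code Q X (k + h)) (hS : 0 < S) :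
    X k = X (k + D) := by
  -- otherwise `k` would be marked when its own window has its turn
  have hnp : ¬ NonPer S ℓ X k := by
    intro hnp
    set s := code (fun u => X (k + (u : ℕ))) with hs
    have hsQ : s < Q := hQ _
    have h0 := hno 0 (by simpa using hS)
    rw [add_zero] at h0
    apply h0
    apply mark_mono X k hsQ
    exact Or.inr ⟨rfl, hnp, fun h hh hm => hno h hh (mark_mono X _ hsQ.le hm)⟩
  unfold NonPer at hnp
  push Not at hnp
  obtain ⟨π, h1, h2, h3⟩ := hnp
  obtain ⟨c, hc⟩ := hD π h1 h2
  have key : ∀ m : ℕ, m ≤ c → X k = X (k + (π * m : ℕ)) := by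
    intro m
    induction m with
    | zero => intro _; simp
    | succ m ih =>
      intro hm
      have hle : π * (m + 1) ≤ π * c := Nat.mul_le_mul_left _ hm
      rw [ih (by omega), h3 (π * m) (by rw [Nat.mul_succ] at hle; omega)]
      congr 1; push_cast; ring
  rw [hc]; exact key c le_rfl

end BurstCode

/-! ### Comparing the mark counts of two words -/

namespace BurstCode
open Finset

section counts
variable {p : ℕ → Prop} [DecidablePred p]

lemma count_le_add (a b : ℕ) (h : a ≤ b) :
    Nat.count p a ≤ Nat.count p b ∧ Nat.count p b ≤ Nat.count p a + (b - a) := by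
  obtain ⟨d, rfl⟩ := Nat.exists_eq_add_of_le h
  rw [Nat.count_add]
  have := Nat.count_le (p := fun k => p (a + k)) (n := d)
  omega

/-- `d` consecutive places carry fewer than `(d + T) / T` marks if marks are `T` apart. -/
lemma count_sparse {T : ℕ} (hT : 0 < T) (hsp : ∀ k k', p k → p k' → k < k' → k + T ≤ k') (a : ℕ) :
    ∀ d, T * Nat.count p (a + d) + 1 ≤ T * Nat.count p a + d + T := by
  intro d
  induction d using Nat.strong_induction_on with
  | _ d ih =>
    rcases d with _ | d
    · simp; omega
    · rw [← add_assoc, Nat.count_succ]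
      split_ifs with hp
      · -- the `T - 1` places before a mark carry no mark
        have flat : ∀ e, e < T → e ≤ d → Nat.count p (a + d) = Nat.count p (a + d - e) := by
          intro e
          induction e with
          | zero => simp
          | succ e ihe =>
            intro h1 h2
            rw [ihe (by omega) (by omega)]
            have h3 : a + d - e = (a + d - (e + 1)) + 1 := by omega
            rw [h3, Nat.count_succ, if_neg, add_zero]
            intro hc
            have := hsp _ _ hc hp (by omega)
            omega
        by_cases hd : d < T
        · rw [flat d hd le_rfl, Nat.add_sub_cancel, mul_add]; omega
        · have := ih (d - (T - 1)) (by omega)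
          rw [flat (T - 1) (by omega) (by omega),
            show a + d - (T - 1) = a + (d - (T - 1)) by omega, mul_add]
          omega
      · have := ih d (by omega); rw [add_zero]; omega

/-- If `p'` is the shift of `p` by `τ` on `[a, b)`, the counting functions differ there by a constant,
up to the same shift. -/
lemma count_shift {p' : ℕ → Prop} [DecidablePred p'] (a b τ : ℕ)
    (h : ∀ k, a ≤ k → k < b → (p' k ↔ p (k + τ))) :
    ∀ k, a ≤ k → k ≤ b →
      Nat.count p (k + τ) + Nat.count p' a = Nat.count p' k + Nat.count p (a + τ) := by
  intro k hk
  induction k, hk using Nat.le_induction with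
  | base => intro _; omega
  | succ k hk ih =>
    intro hb
    have h1 := ih (by omega)
    rw [show k + 1 + τ = k + τ + 1 by ring, Nat.count_succ, Nat.count_succ]
    have h2 := h k hk (by omega)
    by_cases hp : p' k
    · rw [if_pos hp, if_pos (h2.1 hp)]; omega
    · rw [if_neg hp, if_neg (mt h2.2 hp)]; omega

end counts

/-- Telescoping of `∑ (f (k + τ) - f k)`. -/
lemma sum_shift_sub (f : ℕ → ℤ) (e τ m : ℕ) (h : e ≤ m) :
    ∑ k ∈ Ico e m, (f (k + τ) - f k) = ∑ u ∈ range τ, (f (m + u) - f (e + u)) := by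
  induction m, h using Nat.le_induction with
  | base => simp
  | succ m hm ih =>
    rw [Finset.sum_Ico_succ_top hm, ih]
    have h1 := Finset.sum_range_succ' (fun u => f (m + u)) τ
    have h2 := Finset.sum_range_succ (fun u => f (m + u)) τ
    simp only [Finset.sum_sub_distrib]
    rw [h1] at h2
    have e1 : ∑ u ∈ range τ, f (m + 1 + u) = ∑ u ∈ range τ, f (m + (u + 1)) :=
      Finset.sum_congr rfl fun u _ => by rw [show m + 1 + u = m + (u + 1) by ring]
    rw [e1]
    simp only [add_zero] at h2
    linarith

/-- A jump of `g` at `k1` that recurs in `f` at `k1 + τ` is detected by the residue classes. Values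
taken on `[a, e2]` lie in an interval of length `J0`, so the residues of `f a, …, g k1` single out the
places up to the jump; there are `τ` more of them for `f` than for `g`, contradicting `hcls`
because `0 < τ < t + 1`. -/
lemma class_separates (f g : ℕ → ℕ) (fl : ∀ a b, a ≤ b → f a ≤ f b ∧ f b ≤ f a + (b - a))
    (gl : ∀ a b, a ≤ b → g a ≤ g b ∧ g b ≤ g a + (b - a))
    (a e2 k1 τ t N J0 : ℕ) (F1 : ∀ k, k ≤ a → f k = g k) (F3' : ∀ k, e2 ≤ k → f k = g k)
    (hτ : 1 ≤ τ) (hτt : τ ≤ t) (hak : a ≤ k1) (hke : k1 + τ < e2) (heN : e2 ≤ N)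
    (hv : f (k1 + τ) = g k1) (hfs : f (k1 + τ + 1) = g k1 + 1) (hgs : g (k1 + 1) = g k1 + 1)
    (H2 : f e2 < f a + J0)
    (hcls : ∀ A ⊆ range J0, ((range N).filter (fun k => f k % J0 ∈ A)).card ≡
      ((range N).filter (fun k => g k % J0 ∈ A)).card [MOD t + 1]) : False := by
  have A3 := F1 a le_rfl
  have hfe := fl a e2 (by omega)
  have Ja : 0 < J0 := by omega
  set A := (Icc (f a) (g k1)).image (fun v => v % J0) with hA
  have hv0 : f a ≤ g k1 ∧ g k1 < f a + J0 := by
    have := fl a (k1 + τ) (by omega)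
    have := fl (k1 + τ) e2 (by omega)
    omega
  have memA : ∀ x, f a ≤ x → x < f a + J0 → (x % J0 ∈ A ↔ x ≤ g k1) := by
    intro x hx hx'
    rw [hA, Finset.mem_image]
    constructor
    · rintro ⟨v, hv, hvx⟩
      rw [Finset.mem_Icc] at hv
      have hd : (J0 : ℤ) ∣ (x : ℤ) - v := (Nat.modEq_iff_dvd).1 hvx
      have := Int.eq_zero_of_abs_lt_dvd hd (by rw [abs_lt]; constructor <;> omega)
      omega
    · intro h; exact ⟨x, Finset.mem_Icc.2 ⟨hx, h⟩, rfl⟩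
  have hAs : A ⊆ range J0 := by
    intro x hx
    rw [hA, Finset.mem_image] at hx
    obtain ⟨v, _, rfl⟩ := hx
    exact Finset.mem_range.2 (Nat.mod_lt _ Ja)
  -- in the class `A` the two words differ exactly on the `τ` places after `k1`
  have hset : (range N).filter (fun k => f k % J0 ∈ A) =
      (range N).filter (fun k => g k % J0 ∈ A) ∪ Ioc k1 (k1 + τ) := by
    have hge2 := F3' e2 le_rfl
    ext k
    simp only [Finset.mem_union, Finset.mem_filter, Finset.mem_range, Finset.mem_Ioc]
    rcases lt_or_ge k a with hk | hk
    · rw [F1 k hk.le]; constructor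
      · exact fun h => Or.inl h
      · rintro (h | h)
        · exact h
        · omega
    rcases lt_or_ge e2 k with hk2 | hk2
    · rw [F3' k hk2.le]; constructor
      · exact fun h => Or.inl h
      · rintro (h | h)
        · exact h
        · omega
    have q1 := fl a k hk
    have q2 := fl k e2 hk2
    have q3 := gl a k hk
    have q4 := gl k e2 hk2
    rw [memA (f k) (by omega) (by omega), memA (g k) (by omega) (by omega)]
    have r1 : f k ≤ g k1 ↔ k ≤ k1 + τ := by
      constructor
      · intro h; by_contra hc
        have := fl (k1 + τ + 1) k (by omega); omega
      · intro h; have := fl k (k1 + τ) h; omega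
    have r2 : g k ≤ g k1 ↔ k ≤ k1 := by
      constructor
      · intro h; by_contra hc
        have := gl (k1 + 1) k (by omega); omega
      · intro h; exact (gl k k1 h).1
    rw [r1, r2]
    omega
  have hdisj : Disjoint ((range N).filter (fun k => g k % J0 ∈ A)) (Ioc k1 (k1 + τ)) := by
    rw [Finset.disjoint_left]
    intro k hk hk'
    rw [Finset.mem_Ioc] at hk'
    have hk := (Finset.mem_filter.1 hk).2
    have q3 := gl a k (by omega)
    have q4 := gl k e2 (by omega)
    have hge2 := F3' e2 le_rfl
    rw [memA (g k) (by omega) (by omega)] at hk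
    have := gl (k1 + 1) k (by omega)
    omega
  have hfin := hcls A hAs
  rw [hset, Finset.card_union_of_disjoint hdisj, Nat.card_Ioc] at hfin
  have hd := (Nat.modEq_iff_dvd).1 hfin.symm
  push_cast at hd
  have : (τ : ℤ) = 0 := by
    apply Int.eq_zero_of_abs_lt_dvd (m := ((t + 1 : ℕ) : ℤ))
    · push_cast
      convert hd using 1
      have : ((k1 + τ - k1 : ℕ) : ℤ) = τ := by omega
      rw [this]; ring
    · rw [abs_lt]; constructor <;> omega
  omega

set_option maxHeartbeats 1600000 in
/-- Let `p'` agree with `p` before `i` and after `j + τ` and be its shift by `τ` in between, up to an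
error of `r` places around the sites. If the counting functions `f`, `g` of `p`, `p'` agree in total
modulo `N1`, in sum modulo `M0`, and in the sizes of their residue classes modulo `t + 1`, then for
`j - i` large there is no mark between the sites.

In the middle `f (k + τ) = g k + κ`, so `∑ (f - g)` is about `κ (j - i) - τ (number of marks)`.
Marks have density at most `1 / (2 t)`, hence `∑ (f - g) = 0` forces `κ = 0` for `j - i` large. Then
the middle carries only boundedly many marks, and `class_separates` excludes any. -/
theorem no_marks (p p' : ℕ → Prop) [DecidablePred p] [DecidablePred p']
    (i j τ t r N N1 M0 J0 w C1 : ℕ)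
    (hτ : 1 ≤ τ) (hτt : τ ≤ t) (hw : w = 2 * r + t) (hC : C1 = 6 * w * w)
    (hN1 : N1 = 3 * w + 1) (hM0 : M0 = 3 * w * N + 1) (hJ0 : J0 = C1 + 2 * w + 1)
    (h1 : ∀ k, k + r < i → (p k ↔ p' k))
    (h2 : ∀ k, i + r ≤ k → k + r < j → (p' k ↔ p (k + τ)))
    (h3 : ∀ k, j + τ + r ≤ k → (p k ↔ p' k))
    (hsp : ∀ k k', p k → p k' → k < k' → k + 2 * t ≤ k')
    (hN : j + τ + r ≤ N)
    (hcount : Nat.count p N ≡ Nat.count p' N [MOD N1])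
    (hsum : ∑ k ∈ range N, Nat.count p k ≡ ∑ k ∈ range N, Nat.count p' k [MOD M0])
    (hcls : ∀ A ⊆ range J0, ((range N).filter (fun k => Nat.count p k % J0 ∈ A)).card ≡
      ((range N).filter (fun k => Nat.count p' k % J0 ∈ A)).card [MOD t + 1])
    (hlong : i + 2 * r + 2 * C1 + 3 * t < j) :
    ∀ k, i + r ≤ k → k + r < j → ¬ p' k := by
  set f : ℕ → ℕ := fun k => Nat.count p k with hf
  set g : ℕ → ℕ := fun k => Nat.count p' k with hg
  have fl : ∀ a b, a ≤ b → f a ≤ f b ∧ f b ≤ f a + (b - a) := count_le_add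
  have gl : ∀ a b, a ≤ b → g a ≤ g b ∧ g b ≤ g a + (b - a) := count_le_add
  set a := i - r with ha
  set e1 := i + r with he1
  set e2 := j + τ + r with he2
  set m := j - r with hm
  have F1 : ∀ k, k ≤ a → f k = g k := by
    intro k hk
    have := count_shift (p := p) (p' := p') 0 a 0 (fun k _ hk => (h1 k (by omega)).symm) k
      (by omega) hk
    simpa using this
  have F2 : ∀ k, e1 ≤ k → k ≤ m → f (k + τ) + g e1 = g k + f (e1 + τ) :=
    count_shift (p := p) (p' := p') e1 m τ (fun k hk hk' => h2 k hk (by omega))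
  have F3 : ∀ k, e2 ≤ k → f k + g e2 = g k + f e2 := fun k hk =>
    count_shift (p := p) (p' := p') e2 k 0 (fun k hk _ => (h3 k hk).symm) k hk le_rfl
  have A1 := fl a (e1 + τ) (by omega)
  have A2 := gl a e1 (by omega)
  have A3 := F1 a le_rfl
  have A4 := fl (m + τ) e2 (by omega)
  have A5 := gl m e2 (by omega)
  have A6 := F2 m (by omega) le_rfl
  have A7 := F3 N hN
  -- the total counts agree, since they differ by less than the modulus
  have FN : f N = g N := by
    have hd := (Nat.modEq_iff_dvd).1 hcount
    have : ((g N : ℤ) - f N) = 0 := by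
      apply Int.eq_zero_of_abs_lt_dvd hd
      change |(g N : ℤ) - f N| < N1
      rw [abs_lt]; constructor <;> omega
    omega
  have F3' : ∀ k, e2 ≤ k → f k = g k := fun k hk => by have := F3 k hk; omega
  -- the sum modulo `M0` therefore determines the sum
  have F5 : ∀ k, |(f k : ℤ) - g k| ≤ 3 * w := by
    intro k
    rw [abs_le]
    rcases le_total k a with hk | hk
    · have := F1 k hk; constructor <;> omega
    rcases le_total k e1 with hk1 | hk1
    · have := fl a k hk; have := gl a k hk; constructor <;> omega
    rcases le_total k m with hk2 | hk2
    · have := F2 k hk1 hk2; have := fl k (k + τ) (by omega); constructor <;> omega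
    rcases le_total k e2 with hk3 | hk3
    · have := fl k e2 hk3; have := gl k e2 hk3; have := F3' e2 le_rfl
      constructor <;> omega
    · have := F3' k hk3; constructor <;> omega
  have FS : ∑ k ∈ range N, ((f k : ℤ) - g k) = 0 := by
    apply Int.eq_zero_of_abs_lt_dvd (m := (M0 : ℤ))
    · have hd := (Nat.modEq_iff_dvd).1 hsum
      push_cast at hd
      rw [Finset.sum_sub_distrib]
      exact (dvd_sub_comm).1 hd
    · calc |∑ k ∈ range N, ((f k : ℤ) - g k)| ≤ ∑ k ∈ range N, |(f k : ℤ) - g k| :=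
            Finset.abs_sum_le_sum_abs _ _
        _ ≤ ∑ k ∈ range N, (3 * w : ℤ) := Finset.sum_le_sum fun k _ => F5 k
        _ = 3 * w * N := by simp; ring
        _ < M0 := by rw [hM0]; push_cast; linarith
  -- away from two boundary stretches only the middle contributes to the sum
  have bnd : ∀ x y, x ≤ y → y ≤ x + w → |∑ k ∈ Ico x y, ((f k : ℤ) - g k)| ≤ 3 * w * w := by
    intro x y hxy hy
    calc |∑ k ∈ Ico x y, ((f k : ℤ) - g k)| ≤ ∑ k ∈ Ico x y, |(f k : ℤ) - g k| :=
            Finset.abs_sum_le_sum_abs _ _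
      _ ≤ ∑ k ∈ Ico x y, (3 * w : ℤ) := Finset.sum_le_sum fun k _ => F5 k
      _ = 3 * w * ((y - x : ℕ) : ℤ) := by simp; ring
      _ ≤ 3 * w * w := by
        apply mul_le_mul_of_nonneg_left _ (by positivity)
        exact_mod_cast (by omega : y - x ≤ w)
  have split : ∑ k ∈ range N, ((f k : ℤ) - g k) =
      ∑ k ∈ Ico a e1, ((f k : ℤ) - g k) + ∑ k ∈ Ico e1 m, ((f k : ℤ) - g k)
        + ∑ k ∈ Ico m e2, ((f k : ℤ) - g k) := by
    rw [Finset.sum_Ico_consecutive _ (by omega) (by omega),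
      Finset.sum_Ico_consecutive _ (by omega) (by omega), Finset.range_eq_Ico,
      ← Finset.sum_Ico_consecutive _ (Nat.zero_le a) (by omega : a ≤ N),
      ← Finset.sum_Ico_consecutive _ (by omega : a ≤ e2) (by omega : e2 ≤ N)]
    rw [Finset.sum_eq_zero (s := Ico 0 a), Finset.sum_eq_zero (s := Ico e2 N)]
    · ring
    · intro k hk; rw [F3' k (Finset.mem_Ico.1 hk).1]; ring
    · intro k hk; rw [F1 k (Finset.mem_Ico.1 hk).2.le]; ring
  have B1 := bnd a e1 (by omega) (by omega)
  have B2 := bnd m e2 (by omega) (by omega)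
  rw [FS] at split
  rw [abs_le] at B1 B2
  have hC' : (C1 : ℤ) = 3 * w * w + 3 * w * w := by rw [hC]; push_cast; ring
  set κ : ℤ := (f (e1 + τ) : ℤ) - g e1 with hκ
  have mid : ∑ k ∈ Ico e1 m, ((f k : ℤ) - g k) = κ * ((m - e1 : ℕ) : ℤ)
      - ∑ u ∈ range τ, ((f (m + u) : ℤ) - f (e1 + u)) := by
    rw [← sum_shift_sub (fun k => (f k : ℤ)) e1 τ m (by omega)]
    have : κ * ((m - e1 : ℕ) : ℤ) = ∑ k ∈ Ico e1 m, κ := by simp; ring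
    rw [this, ← Finset.sum_sub_distrib]
    refine Finset.sum_congr rfl fun k hk => ?_
    have hk := Finset.mem_Ico.1 hk
    have := F2 k hk.1 hk.2.le
    omega
  have up : ∑ u ∈ range τ, ((f (m + u) : ℤ) - f (e1 + u)) ≤ τ * ((f (m + τ) : ℤ) - f e1) := by
    rw [← nsmul_eq_mul]
    have := Finset.sum_le_card_nsmul (range τ) (fun u => (f (m + u) : ℤ) - f (e1 + u))
      ((f (m + τ) : ℤ) - f e1) (fun u hu => by
        have hu := Finset.mem_range.1 hu
        have := fl (m + u) (m + τ) (by omega)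
        have := fl e1 (e1 + u) (by omega)
        omega)
    simpa using this
  have lo : τ * ((f m : ℤ) - f (e1 + τ)) ≤ ∑ u ∈ range τ, ((f (m + u) : ℤ) - f (e1 + u)) := by
    rw [← nsmul_eq_mul]
    have := Finset.card_nsmul_le_sum (range τ) (fun u => (f (m + u) : ℤ) - f (e1 + u))
      ((f m : ℤ) - f (e1 + τ)) (fun u hu => by
        have hu := Finset.mem_range.1 hu
        have := fl m (m + u) (by omega)
        have := fl (e1 + u) (e1 + τ) (by omega)
        omega)
    simpa using this
  have nonneg : 0 ≤ ∑ u ∈ range τ, ((f (m + u) : ℤ) - f (e1 + u)) :=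
    Finset.sum_nonneg fun u _ => by have := fl (e1 + u) (m + u) (by omega); omega
  have hG0 : (0 : ℤ) ≤ ((m - e1 : ℕ) : ℤ) := by positivity
  have hGlong : ((m - e1 : ℕ) : ℤ) > 2 * C1 + 3 * t := by omega
  -- `κ < 0` makes every middle term at most `-1`; for `κ > 0` the shift can compensate for at most
  -- half of the middle, because marks are `2 t` apart and `τ ≤ t`
  have κ0 : κ = 0 := by
    rcases lt_trichotomy κ 0 with hk | hk | hk
    · exfalso
      have : κ * ((m - e1 : ℕ) : ℤ) ≤ (-1) * ((m - e1 : ℕ) : ℤ) :=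
        mul_le_mul_of_nonneg_right (by omega) hG0
      linarith
    · exact hk
    · exfalso
      have h5 : 1 * ((m - e1 : ℕ) : ℤ) ≤ κ * ((m - e1 : ℕ) : ℤ) :=
        mul_le_mul_of_nonneg_right (by omega) hG0
      have h6 := count_sparse (p := p) (T := 2 * t) (by omega) hsp e1 (m + τ - e1)
      rw [show e1 + (m + τ - e1) = m + τ by omega] at h6
      have h7 : (2 * t : ℤ) * ((f (m + τ) : ℤ) - f e1) ≤ ((m - e1 : ℕ) : ℤ) + 3 * t := by
        have h8 : 2 * t * f (m + τ) ≤ 2 * t * f e1 + (m - e1) + 3 * t := by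
          change 2 * t * f (m + τ) + 1 ≤ 2 * t * f e1 + _ + _ at h6
          omega
        have : ((2 * t * f (m + τ) : ℕ) : ℤ) ≤ ((2 * t * f e1 + (m - e1) + 3 * t : ℕ) : ℤ) := by
          exact_mod_cast h8
        push_cast at this ⊢
        linarith
      have h9 : (τ : ℤ) * ((f (m + τ) : ℤ) - f e1) ≤ t * ((f (m + τ) : ℤ) - f e1) := by
        apply mul_le_mul_of_nonneg_right (by omega)
        have := fl e1 (m + τ) (by omega)
        omega
      have : (0 : ℤ) ≤ C1 := by positivity
      linarith
  rw [κ0, zero_mul] at mid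
  -- `∑ (f - g)` now bounds the number of marks in the middle
  have H1 : (f m : ℤ) - f (e1 + τ) ≤ C1 := by
    have h5 : (1 : ℤ) * ((f m : ℤ) - f (e1 + τ)) ≤ τ * ((f m : ℤ) - f (e1 + τ)) := by
      apply mul_le_mul_of_nonneg_right (by omega)
      have := fl (e1 + τ) m (by omega)
      omega
    linarith
  have H2 : f e2 < f a + J0 := by
    have := fl m e2 (by omega)
    omega
  intro k1 hk1 hk1' hp'
  have hp : p (k1 + τ) := (h2 k1 hk1 hk1').1 hp'
  have hv : f (k1 + τ) = g k1 := by have := F2 k1 hk1 (by omega); omega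
  have hfs : f (k1 + τ + 1) = g k1 + 1 := by
    rw [← hv]; simp only [hf]; rw [Nat.count_succ, if_pos hp]
  have hgs : g (k1 + 1) = g k1 + 1 := by
    simp only [hg]; rw [Nat.count_succ, if_pos hp']
  exact class_separates f g fl gl a e2 k1 τ t N J0 F1 F3' hτ hτt (by omega) (by omega) (by omega)
    hv hfs hgs H2 hcls

end BurstCode

/-! ### Functions supported on two clusters -/

namespace BurstCode

/-- Uniqueness of base-`B` expansions, with signed digits. -/
lemma base_zero (B : ℤ) (α : ℕ → ℤ) (J : ℕ) (hα : ∀ ρ < J, |α ρ| < B)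
    (h : ∑ ρ ∈ Finset.range J, B ^ ρ * α ρ = 0) : ∀ ρ < J, α ρ = 0 := by
  induction J generalizing α with
  | zero => intro ρ h; omega
  | succ J ih =>
    rw [Finset.sum_range_succ'] at h
    have hB : 0 < B := (abs_nonneg _).trans_lt (hα 0 (by omega))
    have e : ∑ ρ ∈ Finset.range J, B ^ (ρ + 1) * α (ρ + 1)
        = B * ∑ ρ ∈ Finset.range J, B ^ ρ * α (ρ + 1) := by
      rw [Finset.mul_sum]; exact Finset.sum_congr rfl fun _ _ => by ring
    rw [e, pow_zero, one_mul] at h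
    have h0 : α 0 = 0 := by
      apply Int.eq_zero_of_abs_lt_dvd (m := B) _ (hα 0 (by omega))
      exact ⟨-∑ ρ ∈ Finset.range J, B ^ ρ * α (ρ + 1), by linarith⟩
    rw [h0, add_zero] at h
    have := ih (fun ρ => α (ρ + 1)) (fun ρ hρ => hα (ρ + 1) (by omega))
      ((mul_eq_zero.mp h).resolve_left hB.ne')
    intro ρ hρ
    cases ρ with
    | zero => exact h0
    | succ ρ => exact this ρ (by omega)

/-- One residue class `T`, meeting each cluster `[a, a + L)`, `[b, b + L)` at most once, and at distance
`G` if it meets both. As `|∑ w| < 2 q`, divisibility by `2 q` forces the two values to be opposite,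
so the first moment is `-G α` with `α` the value in the first cluster. -/
lemma class_two (T : Finset ℕ) (w : ℕ → ℤ) (q G a b L : ℕ) (hw : ∀ k, |w k| < q)
    (hsupp : ∀ k ∈ T, w k ≠ 0 → (a ≤ k ∧ k < a + L) ∨ (b ≤ k ∧ k < b + L))
    (hA : ∀ k ∈ T, ∀ k' ∈ T, a ≤ k → k < a + L → a ≤ k' → k' < a + L → k = k')
    (hB : ∀ k ∈ T, ∀ k' ∈ T, b ≤ k → k < b + L → b ≤ k' → k' < b + L → k = k')
    (hG : ∀ k ∈ T, ∀ k' ∈ T, a ≤ k → k < a + L → b ≤ k' → k' < b + L → k' = k + G ∧ 0 < G)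
    (hsum : ((2 * q : ℕ) : ℤ) ∣ ∑ k ∈ T, w k) :
    ∃ α : ℤ, |α| < q ∧ ∑ k ∈ T, (k : ℤ) * w k = - (G * α) ∧ (G = 0 → α = 0) ∧
      (α = 0 → ∀ k ∈ T, w k = 0) := by
  have hq : (0 : ℤ) < q := (abs_nonneg _).trans_lt (hw 0)
  have single : ∀ k0 ∈ T, (∀ k ∈ T, k ≠ k0 → w k = 0) → ∀ k ∈ T, w k = 0 := by
    intro k0 hk0 hz
    rw [Finset.sum_eq_single_of_mem k0 hk0 hz] at hsum
    have : w k0 = 0 := by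
      apply Int.eq_zero_of_abs_lt_dvd hsum
      have := hw k0; push_cast; linarith
    intro k hk
    by_cases h : k = k0
    · rw [h, this]
    · exact hz k hk h
  have finish : (∀ k ∈ T, w k = 0) → ∃ α : ℤ, |α| < q ∧ ∑ k ∈ T, (k : ℤ) * w k = - (G * α) ∧
      (G = 0 → α = 0) ∧ (α = 0 → ∀ k ∈ T, w k = 0) := by
    intro hz
    refine ⟨0, by simpa using hq, ?_, fun _ => rfl, fun _ => hz⟩
    rw [Finset.sum_eq_zero fun k hk => by rw [hz k hk, mul_zero]]; simp
  by_cases ha : ∃ ka ∈ T, (a ≤ ka ∧ ka < a + L) ∧ w ka ≠ 0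
  · obtain ⟨ka, hka, ⟨ha1, ha2⟩, hwa⟩ := ha
    by_cases hb : ∃ kb ∈ T, (b ≤ kb ∧ kb < b + L) ∧ w kb ≠ 0
    · obtain ⟨kb, hkb, ⟨hb1, hb2⟩, hwb⟩ := hb
      obtain ⟨hkG, hG0⟩ := hG ka hka kb hkb ha1 ha2 hb1 hb2
      have hz : ∀ k ∈ T, k ∉ ({ka, kb} : Finset ℕ) → w k = 0 := by
        intro k hk hk2
        by_contra hne
        simp only [Finset.mem_insert, Finset.mem_singleton, not_or] at hk2
        rcases hsupp k hk hne with h | h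
        · exact hk2.1 (hA k hk ka hka h.1 h.2 ha1 ha2)
        · exact hk2.2 (hB k hk kb hkb h.1 h.2 hb1 hb2)
      have hsub : ({ka, kb} : Finset ℕ) ⊆ T := by
        intro k hk; simp only [Finset.mem_insert, Finset.mem_singleton] at hk
        rcases hk with rfl | rfl <;> assumption
      have hneq : ka ≠ kb := by omega
      rw [← Finset.sum_subset hsub hz, Finset.sum_pair hneq] at hsum
      have h0 : w ka + w kb = 0 := by
        apply Int.eq_zero_of_abs_lt_dvd hsum
        have h1 := hw ka; have h2 := hw kb
        have := abs_add_le (w ka) (w kb)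
        push_cast; linarith
      refine ⟨w ka, hw ka, ?_, fun h => by omega, fun h => absurd h hwa⟩
      rw [← Finset.sum_subset hsub fun k hk hk2 => by rw [hz k hk hk2, mul_zero],
        Finset.sum_pair hneq, hkG]
      have : w (ka + G) = - w ka := by rw [← hkG]; linarith
      rw [this]; push_cast; ring
    · push Not at hb
      refine finish (single ka hka fun k hk hne => ?_)
      by_contra h0
      rcases hsupp k hk h0 with h | h
      · exact hne (hA k hk ka hka h.1 h.2 ha1 ha2)
      · exact h0 (hb k hk h)
  · push Not at ha
    by_cases hb : ∃ kb ∈ T, (b ≤ kb ∧ kb < b + L) ∧ w kb ≠ 0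
    · obtain ⟨kb, hkb, ⟨hb1, hb2⟩, hwb⟩ := hb
      refine finish (single kb hkb fun k hk hne => ?_)
      by_contra h0
      rcases hsupp k hk h0 with h | h
      · exact h0 (ha k hk h)
      · exact hne (hB k hk kb hkb h.1 h.2 hb1 hb2)
    · push Not at hb
      refine finish fun k hk => ?_
      by_contra h0
      rcases hsupp k hk h0 with h | h
      · exact h0 (ha k hk h)
      · exact h0 (hb k hk h)

lemma mod_eq_of_close {k k' J : ℕ} (h : k % J = k' % J) (h1 : k < k' + J) (h2 : k' < k + J) :
    k = k' := by
  have hd : (J : ℤ) ∣ (k : ℤ) - k' := by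
    have : k' ≡ k [MOD J] := h.symm
    exact (Nat.modEq_iff_dvd).1 this
  have := Int.eq_zero_of_abs_lt_dvd hd (by rw [abs_lt]; constructor <;> omega)
  omega

/-- A function with values in `(-q, q)` supported on two clusters vanishes if its sums over the residue
classes modulo `J` vanish modulo `2 q` and its moment weighted by `q ^ (k % J)` vanishes modulo `M`.
The class moments are `-G α ρ` with a common `G`, so that the weighted moment is the number with
digits `α ρ` in base `q`, times `-G`; it is smaller than `M`, hence zero, and so are its digits. -/
lemma two_clusters (w : ℕ → ℤ) (q N J a b L M : ℕ) (hw : ∀ k, |w k| < q) (hL : 0 < L)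
    (hJ : 2 * L ≤ J) (hab : a + L ≤ b)
    (hsupp : ∀ k < N, w k ≠ 0 → (a ≤ k ∧ k < a + L) ∨ (b ≤ k ∧ k < b + L))
    (hclass : ∀ ρ < J, ((2 * q : ℕ) : ℤ) ∣ ∑ k ∈ (Finset.range N).filter (fun k => k % J = ρ), w k)
    (hmom : (M : ℤ) ∣ ∑ k ∈ Finset.range N, (q : ℤ) ^ (k % J) * ((k : ℤ) * w k))
    (hM : (b - a + L) * (J * q ^ (J + 1)) < M) : ∀ k < N, w k = 0 := by
  have hJ0 : 0 < J := by omega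
  -- the only multiple of `J` that can be a distance between the two clusters
  set G := J * ((b - a + L - 1) / J) with hGdef
  have hGle : G ≤ b - a + L - 1 := Nat.mul_div_le _ _
  have hGlt : b - a + L - 1 < G + J := by
    have := Nat.lt_mul_div_succ (b - a + L - 1) hJ0
    rw [Nat.mul_succ] at this; exact this
  have hGmod : ∀ k, (k + G) % J = k % J := fun k => Nat.add_mul_mod_self_left k J _
  have key : ∀ ρ < J, ∃ α : ℤ, |α| < q ∧
      ∑ k ∈ (Finset.range N).filter (fun k => k % J = ρ), (k : ℤ) * w k = - (G * α) ∧
      (G = 0 → α = 0) ∧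
      (α = 0 → ∀ k ∈ (Finset.range N).filter (fun k => k % J = ρ), w k = 0) := by
    intro ρ hρ
    apply class_two _ w q G a b L hw
    · intro k hk; exact hsupp k (by simpa using (Finset.mem_filter.1 hk).1)
    · intro k hk k' hk' h1 h2 h3 h4
      exact mod_eq_of_close ((Finset.mem_filter.1 hk).2.trans (Finset.mem_filter.1 hk').2.symm)
        (by omega) (by omega)
    · intro k hk k' hk' h1 h2 h3 h4
      exact mod_eq_of_close ((Finset.mem_filter.1 hk).2.trans (Finset.mem_filter.1 hk').2.symm)
        (by omega) (by omega)
    · intro k hk k' hk' h1 h2 h3 h4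
      have e : k' = k + G := by
        apply mod_eq_of_close (J := J)
        · rw [hGmod]
          exact (Finset.mem_filter.1 hk').2.trans (Finset.mem_filter.1 hk).2.symm
        · omega
        · omega
      exact ⟨e, by omega⟩
    · exact hclass ρ hρ
  choose! α hα1 hα2 hα3 hα4 using key
  have hsumeq : ∑ k ∈ Finset.range N, (q : ℤ) ^ (k % J) * ((k : ℤ) * w k)
      = - (G * ∑ ρ ∈ Finset.range J, (q : ℤ) ^ ρ * α ρ) := by
    rw [← Finset.sum_fiberwise_of_maps_to (s := Finset.range N) (t := Finset.range J)
      (g := fun k => k % J) (fun k _ => Finset.mem_range.2 (Nat.mod_lt _ hJ0))]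
    rw [Finset.mul_sum, ← Finset.sum_neg_distrib]
    refine Finset.sum_congr rfl fun ρ hρ => ?_
    have : ∀ k ∈ (Finset.range N).filter (fun k => k % J = ρ),
        (q : ℤ) ^ (k % J) * ((k : ℤ) * w k) = (q : ℤ) ^ ρ * ((k : ℤ) * w k) := by
      intro k hk; rw [(Finset.mem_filter.1 hk).2]
    rw [Finset.sum_congr rfl this, ← Finset.mul_sum, hα2 ρ (Finset.mem_range.1 hρ)]
    ring
  have hq0 : (0 : ℤ) < q := (abs_nonneg _).trans_lt (hw 0)
  have hq1 : 1 ≤ q := by exact_mod_cast hq0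
  have hbound : |∑ ρ ∈ Finset.range J, (q : ℤ) ^ ρ * α ρ| ≤ ((J * q ^ (J + 1) : ℕ) : ℤ) := by
    calc _ ≤ ∑ ρ ∈ Finset.range J, |(q : ℤ) ^ ρ * α ρ| := Finset.abs_sum_le_sum_abs _ _
      _ ≤ ∑ ρ ∈ Finset.range J, (q : ℤ) ^ (J + 1) := by
          refine Finset.sum_le_sum fun ρ hρ => ?_
          have hρ := Finset.mem_range.1 hρ
          rw [abs_mul, abs_of_nonneg (by positivity), pow_succ]
          exact mul_le_mul (pow_le_pow_right₀ (by exact_mod_cast hq1) hρ.le) (hα1 ρ hρ).le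
            (abs_nonneg _) (by positivity)
      _ = _ := by simp
  rw [hsumeq] at hmom
  have hzero := Int.eq_zero_of_abs_lt_dvd hmom (by
    rw [abs_neg, abs_mul, abs_of_nonneg (by positivity : (0:ℤ) ≤ G)]
    calc (G : ℤ) * _ ≤ ((b - a + L : ℕ) : ℤ) * ((J * q ^ (J + 1) : ℕ) : ℤ) :=
          mul_le_mul (by exact_mod_cast (by omega)) hbound (abs_nonneg _) (by positivity)
      _ < M := by exact_mod_cast hM)
  have hall : ∀ ρ < J, α ρ = 0 := by
    by_cases hG0 : G = 0
    · exact fun ρ hρ => hα3 ρ hρ hG0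
    · refine base_zero q α J hα1 ?_
      have := neg_eq_zero.1 hzero
      exact (mul_eq_zero.1 this).resolve_left (by exact_mod_cast hG0)
  intro k hk
  have hρ := Nat.mod_lt k hJ0
  exact hα4 _ hρ (hall _ hρ) k (by simp [hk])

/-- A single cluster of length `J` meets each residue class modulo `J` at most once. -/
lemma one_cluster (w : ℕ → ℤ) (q N J a : ℕ) (hw : ∀ k, |w k| < q) (hJ0 : 0 < J)
    (hsupp : ∀ k < N, w k ≠ 0 → a ≤ k ∧ k < a + J)
    (hclass : ∀ ρ < J, ((2 * q : ℕ) : ℤ) ∣ ∑ k ∈ (Finset.range N).filter (fun k => k % J = ρ), w k) :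
    ∀ k < N, w k = 0 := by
  intro k hk
  by_contra hne
  have h := hclass (k % J) (Nat.mod_lt _ hJ0)
  rw [Finset.sum_eq_single_of_mem k (by simp [hk])] at h
  · exact hne (Int.eq_zero_of_abs_lt_dvd h (by
      have := hw k; have := abs_nonneg (w k); push_cast; linarith))
  · intro k' hk' hkk
    by_contra h0
    have hm := Finset.mem_filter.1 hk'
    have h1 := hsupp k hk hne
    have h2 := hsupp k' (by simpa using hm.1) h0
    exact hkk (mod_eq_of_close hm.2 (by omega) (by omega))

end BurstCode

/-! ### Words with equal keys and a common descendant -/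

namespace BurstCode
open Finset

/-- `Y_k = X_k - X_{k+D}`, lifted to `{0, …, q - 1}`. -/
def lag {q : ℕ} (D : ℕ) (X : ℤ → ZMod q) (k : ℕ) : ℕ := (X k - X (k + D)).val

section conflict
variable {q t : ℕ} {S ℓ D Q r : ℕ} {code : (Fin ℓ → ZMod q) → ℕ}

/-- Two words `X`, `Z`, padded by zeros, that agree before `i` and from `j + τ` on, while `Z` is `X`
shifted by `τ` in between, are equal as soon as their keys agree and `Z` is good. If the sites are
close, the differences of the lags lie in one cluster. Otherwise `no_marks` makes both words
`D`-periodic between the sites; the lags vanish there, leaving two clusters whose distance is at most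
about `P` because `Z` is good. -/
theorem conflict_eq [NeZero q] (hS : S = 2 * t) (hcode : Function.Injective code)
    (hQ : ∀ w, code w < Q) (hD : ∀ π : ℕ, 1 ≤ π → π < S → π ∣ D) (hD0 : 0 < D) (hℓ : ℓ = D + 1)
    (hr : r = Q * S + ℓ) (n P N w C1 N1 M0 J0 R1 L T J M2 : ℕ)
    (hw : w = 2 * r + t) (hC : C1 = 6 * w * w)
    (hN1 : N1 = 3 * w + 1) (hM0 : M0 = 3 * w * N + 1) (hJ0 : J0 = C1 + 2 * w + 1)
    (hN : N = n + r) (hR1 : R1 = r + S + t) (hL : L = D + R1 + t)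
    (hT : T = 2 * r + 2 * C1 + 3 * t + 2 * R1 + D + t) (hJ : J = 2 * L + D + T + t)
    (hM2 : (P + 2 * R1 + D + L) * (J * q ^ (J + 1)) < M2)
    (p p' : ℕ → Prop) [DecidablePred p] [DecidablePred p']
    (X Z : ℤ → ZMod q) (hp : ∀ k : ℕ, p k ↔ Mark S ℓ code Q X k)
    (hp' : ∀ k : ℕ, p' k ↔ Mark S ℓ code Q Z k)
    (hXn : ∀ k : ℤ, k < 0 ∨ (n : ℤ) ≤ k → X k = 0) (hZn : ∀ k : ℤ, k < 0 ∨ (n : ℤ) ≤ k → Z k = 0)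
    (good : ∀ k : ℕ, k + P + D ≤ n → ∃ u < P, Z ((k + u : ℕ) : ℤ) ≠ Z ((k + u + D : ℕ) : ℤ))
    (hcount : Nat.count p N ≡ Nat.count p' N [MOD N1])
    (hsum : ∑ k ∈ range N, Nat.count p k ≡ ∑ k ∈ range N, Nat.count p' k [MOD M0])
    (hcls : ∀ A ⊆ range J0, ((range N).filter (fun k => Nat.count p k % J0 ∈ A)).card ≡
      ((range N).filter (fun k => Nat.count p' k % J0 ∈ A)).card [MOD t + 1])
    (hlag : ∀ ρ < J, ∑ k ∈ (range N).filter (fun k => k % J = ρ), lag D X k ≡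
      ∑ k ∈ (range N).filter (fun k => k % J = ρ), lag D Z k [MOD 2 * q])
    (hmom : ∑ k ∈ range N, q ^ (k % J) * (k * lag D X k) ≡
      ∑ k ∈ range N, q ^ (k % J) * (k * lag D Z k) [MOD M2])
    (i j τ : ℕ) (hij : i ≤ j) (hτ : 1 ≤ τ) (hτt : τ ≤ t) (hjn : j + τ ≤ n)
    (c1 : ∀ k : ℤ, k < i → X k = Z k)
    (c2 : ∀ k : ℤ, (i : ℤ) ≤ k → k < j → Z k = X (k + τ))
    (c3 : ∀ k : ℤ, (j : ℤ) + τ ≤ k → X k = Z k) : X = Z := by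
  set v : ℕ → ℤ := fun k => (lag D X k : ℤ) - lag D Z k with hv
  have hvq : ∀ k, |v k| < q := by
    intro k
    have h1 : lag D X k < q := ZMod.val_lt _
    have h2 : lag D Z k < q := ZMod.val_lt _
    simp only [hv]
    rw [abs_lt]; constructor <;> omega
  have hv0 : ∀ k : ℕ, X k - X (k + D) = Z k - Z (k + D) → v k = 0 := by
    intro k hk
    simp only [hv, lag]; rw [hk]; ring
  have hvclass : ∀ ρ < J, ((2 * q : ℕ) : ℤ) ∣
      ∑ k ∈ (range N).filter (fun k => k % J = ρ), v k := by
    intro ρ hρ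
    have := (Nat.modEq_iff_dvd).1 (hlag ρ hρ).symm
    push_cast at this ⊢
    simpa only [hv, Finset.sum_sub_distrib] using this
  have hvmom : (M2 : ℤ) ∣ ∑ k ∈ range N, (q : ℤ) ^ (k % J) * ((k : ℤ) * v k) := by
    have := (Nat.modEq_iff_dvd).1 hmom.symm
    push_cast at this
    simpa only [hv, mul_sub, Finset.sum_sub_distrib] using this
  have hleft : ∀ k : ℕ, v k ≠ 0 → i ≤ k + D := by
    intro k hk
    by_contra hc
    apply hk; apply hv0
    rw [c1 k (by omega), c1 (k + D) (by omega)]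
  have hright : ∀ k : ℕ, v k ≠ 0 → k < j + τ := by
    intro k hk
    by_contra hc
    apply hk; apply hv0
    rw [c3 k (by omega), c3 (k + D) (by omega)]
  have hJpos : 0 < J := by omega
  have hvz : ∀ k < N, v k = 0 := by
    by_cases hlong : j ≤ i + T
    · apply one_cluster v q N J (i - D) hvq hJpos _ hvclass
      intro k _ hk
      have := hleft k hk
      have := hright k hk
      omega
    · push Not at hlong
      have e : ((Q * S + ℓ : ℕ) : ℤ) = r := by rw [hr]
      have hno := no_marks p p' i j τ t r N N1 M0 J0 w C1 hτ hτt hw hC hN1 hM0 hJ0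
        (fun k hk => by
          rw [hp, hp', mark_local Q Z X 0 k, add_zero]
          intro u h1 h2
          rw [e] at h1 h2
          rw [add_zero]; exact c1 u (by omega))
        (fun k hk hk' => by
          rw [hp, hp', mark_local Q X Z τ k]
          · push_cast; rfl
          · intro u h1 h2
            rw [e] at h1 h2
            exact c2 u (by omega) (by omega))
        (fun k hk => by
          rw [hp, hp', mark_local Q Z X 0 k, add_zero]
          intro u h1 h2
          rw [e] at h1 h2
          rw [add_zero]; exact c3 u (by omega))
        (fun k k' hk hk' hlt => by
          rw [hp] at hk hk'
          have := mark_sparse hcode X Q k k' hk hk' (by omega)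
          omega)
        (by omega) hcount hsum hcls (by omega)
      -- without marks, both words are `D`-periodic on the middle stretch
      have hZmid : ∀ k : ℕ, i + R1 ≤ k → k + R1 < j → Z k = Z (k + D) := by
        intro k hk hk'
        apply eq_of_no_mark hQ hD (by omega) Z k _ (by omega)
        intro h hh hm
        rw [abs_lt] at hh
        apply hno ((k : ℤ) + h).toNat (by omega) (by omega)
        rw [hp', Int.toNat_of_nonneg (by omega)]
        exact hm
      have hXmid : ∀ k : ℕ, i + R1 ≤ k → k + R1 < j → X k = X (k + D) := by
        intro k hk hk'
        apply eq_of_no_mark hQ hD (by omega) X k _ (by omega)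
        intro h hh hm
        rw [abs_lt] at hh
        apply hno ((k : ℤ) + h - τ).toNat (by omega) (by omega)
        rw [hp', Int.toNat_of_nonneg (by omega), mark_local Q X Z τ, sub_add_cancel]
        · exact hm
        · intro u h1 h2
          rw [e] at h1 h2
          exact c2 u (by omega) (by omega)
      have hshort : j < i + P + 2 * R1 := by
        by_contra hc
        push Not at hc
        obtain ⟨u, hu, hne⟩ := good (i + R1) (by omega)
        apply hne
        have := hZmid (i + R1 + u) (by omega) (by omega)
        rw [this]; push_cast; rfl
      apply two_clusters v q N J (i - D) (j - R1) L M2 hvq (by omega) (by omega) (by omega) _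
        hvclass hvmom
      · refine lt_of_le_of_lt (Nat.mul_le_mul_right _ ?_) hM2
        omega
      · intro k _ hk
        have h1 := hleft k hk
        have h2 := hright k hk
        by_cases hk1 : k < i + R1
        · left; omega
        by_cases hk2 : k + R1 < j
        · exfalso
          apply hk; apply hv0
          rw [← hXmid k (by omega) hk2, ← hZmid k (by omega) hk2]; simp
        · right; omega
  -- equal differences and equal tails force equality, from right to left
  have key : ∀ d : ℕ, ∀ k : ℕ, n ≤ k + d → X k = Z k := by
    intro d
    induction d with
    | zero => intro k hk; rw [hXn k (by omega), hZn k (by omega)]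
    | succ d ih =>
      intro k hk
      by_cases hkn : n ≤ k
      · rw [hXn k (by omega), hZn k (by omega)]
      · have h1 := hvz k (by omega)
        have h2 : lag D X k = lag D Z k := by simp only [hv] at h1; omega
        have h3 := ZMod.val_injective q h2
        have h4 := ih (k + D) (by omega)
        push_cast at h4
        rw [h4] at h3
        exact sub_left_injective h3
  funext k
  rcases lt_or_ge k 0 with hk | hk
  · rw [hXn k (Or.inl hk), hZn k (Or.inl hk)]
  · have := key n k.toNat (by omega)
    rwa [Int.toNat_of_nonneg hk] at this

end conflict
end BurstCode

/-! ### Words as lists, and the pigeonhole argument -/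

namespace BurstCode
open Finset

/-- A word extended by zeros to a two-sided sequence. -/
def padded {q : ℕ} (x : List (ZMod q)) (k : ℤ) : ZMod q := if 0 ≤ k then x.getD k.toNat 0 else 0

lemma padded_natCast {q : ℕ} (x : List (ZMod q)) (k : ℕ) : padded x k = x.getD k 0 := by
  simp [padded]

lemma padded_out {q : ℕ} (x : List (ZMod q)) (k : ℤ) (hk : k < 0 ∨ (x.length : ℤ) ≤ k) :
    padded x k = 0 := by
  unfold padded
  split_ifs with h
  · exact List.getD_eq_default _ _ (by omega)
  · rfl

lemma padded_injective {q : ℕ} {x z : List (ZMod q)} (hl : x.length = z.length)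
    (h : padded x = padded z) : x = z := by
  apply List.ext_getElem hl
  intro k h1 h2
  have := congrFun h k
  rw [padded_natCast, padded_natCast, List.getD_eq_getElem _ _ h1, List.getD_eq_getElem _ _ h2]
    at this
  exact this

lemma getD_delete {q : ℕ} (x : List (ZMod q)) (i τ k : ℕ) (h : i + τ ≤ x.length) :
    (x.take i ++ x.drop (i + τ)).getD k 0 = if k < i then x.getD k 0 else x.getD (k + τ) 0 := by
  simp only [List.getD_eq_getElem?_getD, List.getElem?_append, List.length_take]
  rw [min_eq_left (by omega)]
  split_ifs with hk
  · rw [List.getElem?_take_of_lt hk]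
  · rw [List.getElem?_drop, show i + τ + (k - i) = k + τ by omega]

/-- A common descendant of two distinct words of the same length comes from two deletions of the same
positive length. -/
lemma conflict_of_ball {q t n : ℕ} {x z w : List (ZMod q)} (hx : x.length = n) (hz : z.length = n)
    (hwx : w ∈ ballLE t x) (hwz : w ∈ ballLE t z) (hne : x ≠ z) :
    ∃ i j τ, 1 ≤ τ ∧ τ ≤ t ∧ i + τ ≤ n ∧ j + τ ≤ n ∧
      x.take i ++ x.drop (i + τ) = z.take j ++ z.drop (j + τ) := by
  obtain ⟨i, τ, hτ, hi, rfl⟩ := hwx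
  obtain ⟨j, τ', hτ', hj, he⟩ := hwz
  have hlen := congrArg List.length he
  simp only [List.length_append, List.length_take, List.length_drop] at hlen
  have : τ = τ' := by omega
  subst this
  refine ⟨i, j, τ, ?_, hτ, by omega, by omega, he⟩
  by_contra h0
  have : τ = 0 := by omega
  subst this
  simp only [add_zero, List.take_append_drop] at he
  exact hne he

/-- Common descendants, read on the padded words: agreement outside the sites `i ≤ j` and a shift by
`τ` between them. -/
lemma shift_of_eq {q n : ℕ} {x z : List (ZMod q)} (hx : x.length = n) (hz : z.length = n)
    (i j τ : ℕ) (hij : i ≤ j) (hi : i + τ ≤ n) (hj : j + τ ≤ n)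
    (he : x.take i ++ x.drop (i + τ) = z.take j ++ z.drop (j + τ)) :
    (∀ k : ℤ, k < i → padded x k = padded z k) ∧
    (∀ k : ℤ, (i : ℤ) ≤ k → k < j → padded z k = padded x (k + τ)) ∧
    (∀ k : ℤ, (j : ℤ) + τ ≤ k → padded x k = padded z k) := by
  have key : ∀ k : ℕ, (if k < i then x.getD k 0 else x.getD (k + τ) 0) =
      if k < j then z.getD k 0 else z.getD (k + τ) 0 := by
    intro k
    rw [← getD_delete x i τ k (by omega), ← getD_delete z j τ k (by omega), he]
  refine ⟨fun k hk => ?_, fun k hk hk' => ?_, fun k hk => ?_⟩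
  · rcases lt_or_ge k 0 with h0 | h0
    · rw [padded_out x k (Or.inl h0), padded_out z k (Or.inl h0)]
    · lift k to ℕ using h0
      have := key k
      rw [if_pos (by omega), if_pos (by omega)] at this
      rw [padded_natCast, padded_natCast, this]
  · lift k to ℕ using (by omega)
    have := key k
    rw [if_neg (by omega), if_pos (by omega)] at this
    rw [← Nat.cast_add, padded_natCast, padded_natCast, this]
  · obtain ⟨m, rfl⟩ : ∃ m : ℕ, k = ((m + τ : ℕ) : ℤ) := ⟨(k - τ).toNat, by omega⟩
    have := key m
    rw [if_neg (by omega), if_neg (by omega)] at this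
    rw [padded_natCast, padded_natCast, this]

/-- Some fibre of `f` has at least the average size. -/
lemma pigeon {α β : Type*} [Fintype β] [DecidableEq β] [Nonempty β] (s : Finset α) (f : α → β) :
    ∃ y, s.card ≤ Fintype.card β * (s.filter (fun x => f x = y)).card := by
  by_contra hc
  push Not at hc
  have h1 := Finset.card_eq_sum_card_fiberwise (f := f) (s := s) (t := univ)
    (fun _ _ => Finset.mem_coe.2 (Finset.mem_univ _))
  have h2 : ∑ y : β, Fintype.card β * (s.filter (fun x => f x = y)).card <
      ∑ _y : β, s.card := Finset.sum_lt_sum_of_nonempty Finset.univ_nonempty fun y _ => hc y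
  rw [← Finset.mul_sum, ← h1] at h2
  simp at h2

/-- `X` has no stretch of `P` consecutive places, within the first `n`, on which `X k = X (k + D)`. -/
def Good {q : ℕ} (n P D : ℕ) (X : ℤ → ZMod q) : Prop :=
  ∀ k : ℕ, k + P + D ≤ n → ∃ u < P, X ((k + u : ℕ) : ℤ) ≠ X ((k + u + D : ℕ) : ℤ)

/-- At least half of all words are good if `q ^ P ≥ 2 n`, by the union bound. -/
lemma exists_good (q n P D : ℕ) [NeZero q] (hD : 0 < D) (hP : 2 * n ≤ q ^ P) (hPn : P ≤ n) :
    ∃ s : Finset (List (ZMod q)), (∀ x ∈ s, x.length = n ∧ Good n P D (padded x)) ∧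
      q ^ n ≤ 2 * s.card := by
  classical
  set W : Finset (List (ZMod q)) := (univ : Finset (Fin n → ZMod q)).map
    ⟨List.ofFn, List.ofFn_injective⟩ with hW
  have hWl : ∀ x ∈ W, x.length = n := by
    intro x hx
    obtain ⟨f, _, rfl⟩ := Finset.mem_map.1 hx
    simp
  have hWc : W.card = q ^ n := by
    rw [hW, Finset.card_map, Finset.card_univ]; simp [ZMod.card]
  set B : ℕ → Finset (List (ZMod q)) := fun k => W.filter fun x => k + P + D ≤ n ∧
    ∀ u < P, padded x ((k + u : ℕ) : ℤ) = padded x ((k + u + D : ℕ) : ℤ) with hB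
  -- a word of `B k` is determined by its values outside `[k, k + P)`
  have hBc : ∀ k, (B k).card ≤ q ^ (n - P) := by
    intro k
    have hc : Fintype.card (Fin (n - P) → ZMod q) = q ^ (n - P) := by simp [ZMod.card]
    rw [← hc, ← Finset.card_univ]
    apply Finset.card_le_card_of_injOn
      (fun x (m : Fin (n - P)) => padded x ((if (m : ℕ) < k then (m : ℕ) else m + P : ℕ) : ℤ))
      (fun _ _ => Finset.mem_coe.2 (Finset.mem_univ _))
    intro x hx z hz hxz
    obtain ⟨hxW, hk, hxp⟩ := Finset.mem_filter.1 (Finset.mem_coe.1 hx)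
    obtain ⟨hzW, _, hzp⟩ := Finset.mem_filter.1 (Finset.mem_coe.1 hz)
    have hxl := hWl x hxW
    have hzl := hWl z hzW
    have low : ∀ m < k, padded x (m : ℕ) = padded z (m : ℕ) := by
      intro m hm
      have := congrFun hxz ⟨m, by omega⟩
      simpa only [if_pos hm] using this
    have high : ∀ m : ℕ, k + P ≤ m → padded x (m : ℕ) = padded z (m : ℕ) := by
      intro m hm
      by_cases hmn : m < n
      · have := congrFun hxz ⟨m - P, by omega⟩
        simp only at this
        rw [if_neg (by omega), Nat.sub_add_cancel (by omega)] at this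
        exact this
      · rw [padded_out x m (by omega), padded_out z m (by omega)]
    have mid : ∀ d m : ℕ, k ≤ m → k + P ≤ m + d → padded x (m : ℕ) = padded z (m : ℕ) := by
      intro d
      induction d with
      | zero => intro m _ h; exact high m h
      | succ d ih =>
        intro m hkm h
        by_cases hmP : k + P ≤ m
        · exact high m hmP
        · have h1 := hxp (m - k) (by omega)
          have h2 := hzp (m - k) (by omega)
          rw [show k + (m - k) = m by omega] at h1 h2
          rw [h1, h2]
          exact ih _ (by omega) (by omega)
    apply padded_injective (hxl.trans hzl.symm)
    funext m
    rcases lt_or_ge m 0 with h0 | h0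
    · rw [padded_out x m (Or.inl h0), padded_out z m (Or.inl h0)]
    · lift m to ℕ using h0
      rcases lt_or_ge m k with h | h
      · exact low m h
      · exact mid P m h (by omega)
  set U := (range n).biUnion B with hU
  have hUc : 2 * U.card ≤ q ^ n := by
    have h1 : U.card ≤ n * q ^ (n - P) := by
      simpa using Finset.card_biUnion_le_card_mul (range n) B _ fun k _ => hBc k
    calc 2 * U.card ≤ 2 * n * q ^ (n - P) := by rw [mul_assoc]; omega
      _ ≤ q ^ P * q ^ (n - P) := Nat.mul_le_mul_right _ hP
      _ = q ^ n := by rw [← pow_add]; congr 1; omega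
  refine ⟨W \ U, ?_, ?_⟩
  · intro x hx
    obtain ⟨hxW, hxU⟩ := Finset.mem_sdiff.1 hx
    refine ⟨hWl x hxW, fun k hk => ?_⟩
    by_contra hc
    push Not at hc
    apply hxU
    rw [hU, Finset.mem_biUnion]
    exact ⟨k, Finset.mem_range.2 (by omega), Finset.mem_filter.2 ⟨hxW, hk, hc⟩⟩
  · have := Finset.le_card_sdiff U W
    omega

/-- A code of size at least `q ^ n / (c n log n)`: the largest class of good words with a common key. -/
theorem exists_code (q t : ℕ) (hq : 2 ≤ q) (ht : 2 ≤ t) : ∃ c : ℕ, 0 < c ∧ ∀ n, 4 ≤ n →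
    ∃ C : Finset (List (ZMod q)), (∀ x ∈ C, x.length = n) ∧
      (∀ x ∈ C, ∀ z ∈ C, x ≠ z → ∀ w, w ∈ ballLE t x → w ∉ ballLE t z) ∧
      q ^ n ≤ c * n * Nat.log 2 n * C.card := by
  classical
  have : NeZero q := ⟨by omega⟩
  obtain ⟨S, hS⟩ : ∃ S, S = 2 * t := ⟨_, rfl⟩
  obtain ⟨D, hDS⟩ : ∃ D, D = S.factorial := ⟨_, rfl⟩
  obtain ⟨ℓ, hℓ⟩ : ∃ ℓ, ℓ = D + 1 := ⟨_, rfl⟩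
  have hD0 : 0 < D := hDS ▸ Nat.factorial_pos S
  have hD : ∀ π : ℕ, 1 ≤ π → π < S → π ∣ D := fun π h1 h2 =>
    hDS ▸ Nat.dvd_factorial (by omega) h2.le
  obtain ⟨Q, hQdef⟩ : ∃ Q, Q = Fintype.card (Fin ℓ → ZMod q) := ⟨_, rfl⟩
  obtain ⟨code, hcode, hQ⟩ : ∃ code : (Fin ℓ → ZMod q) → ℕ, Function.Injective code ∧
      ∀ v, code v < Q :=
    ⟨fun v => (Fintype.equivFin _ v : ℕ), fun a b h => (Fintype.equivFin _).injective (Fin.ext h),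
      fun v => hQdef ▸ (Fintype.equivFin _ v).2⟩
  obtain ⟨r, hr⟩ : ∃ r, r = Q * S + ℓ := ⟨_, rfl⟩
  obtain ⟨w, hw⟩ : ∃ w, w = 2 * r + t := ⟨_, rfl⟩
  obtain ⟨C1, hC⟩ : ∃ C1, C1 = 6 * w * w := ⟨_, rfl⟩
  obtain ⟨N1, hN1⟩ : ∃ N1, N1 = 3 * w + 1 := ⟨_, rfl⟩
  obtain ⟨J0, hJ0⟩ : ∃ J0, J0 = C1 + 2 * w + 1 := ⟨_, rfl⟩
  obtain ⟨R1, hR1⟩ : ∃ R1, R1 = r + S + t := ⟨_, rfl⟩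
  obtain ⟨L, hL⟩ : ∃ L, L = D + R1 + t := ⟨_, rfl⟩
  obtain ⟨T, hT⟩ : ∃ T, T = 2 * r + 2 * C1 + 3 * t + 2 * R1 + D + t := ⟨_, rfl⟩
  obtain ⟨J, hJ⟩ : ∃ J, J = 2 * L + D + T + t := ⟨_, rfl⟩
  obtain ⟨c2, hc2⟩ : ∃ c2, c2 = J * q ^ (J + 1) := ⟨_, rfl⟩
  obtain ⟨c1, hc1⟩ : ∃ c1, c1 = 2 * R1 + D + L := ⟨_, rfl⟩
  obtain ⟨kA, hkA⟩ : ∃ kA, kA = (t + 1) ^ 2 ^ J0 := ⟨_, rfl⟩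
  obtain ⟨kB, hkB⟩ : ∃ kB, kB = (2 * q) ^ J := ⟨_, rfl⟩
  have : NeZero N1 := ⟨by omega⟩
  have : NeZero (2 * q) := ⟨by omega⟩
  have hkA0 : 0 < kA := hkA ▸ by positivity
  have hkB0 : 0 < kB := hkB ▸ Nat.pow_pos (by omega)
  -- the number of keys is at most half of this constant times `n * log n`
  refine ⟨2 * (N1 * ((3 * w * (1 + r) + 1) * (kA * (kB * ((c1 + 3) * c2 + 1))))), ?_, ?_⟩
  · rw [hN1]; positivity
  intro n hn
  -- `P` is chosen so that `2 * n ≤ q ^ P` while `P = O(log n)`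
  obtain ⟨P, hP⟩ : ∃ P, P = Nat.log 2 n + 2 := ⟨_, rfl⟩
  obtain ⟨N, hN⟩ : ∃ N, N = n + r := ⟨_, rfl⟩
  obtain ⟨M0, hM0⟩ : ∃ M0, M0 = 3 * w * N + 1 := ⟨_, rfl⟩
  obtain ⟨M2, hM2⟩ : ∃ M2, M2 = (P + c1) * c2 + 1 := ⟨_, rfl⟩
  have : NeZero M0 := ⟨by omega⟩
  have : NeZero M2 := ⟨by omega⟩
  have hlog1 : 1 ≤ Nat.log 2 n := Nat.log_pos (by omega) (by omega)
  have hPq : 2 * n ≤ q ^ P := by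
    have h1 : n < 2 ^ (Nat.log 2 n + 1) := Nat.lt_pow_succ_log_self (by omega) n
    calc 2 * n ≤ 2 ^ P := by rw [hP, pow_succ]; omega
      _ ≤ q ^ P := Nat.pow_le_pow_left hq P
  have hPn : P ≤ n := by
    have h1 : 2 ^ Nat.log 2 n ≤ n := Nat.pow_log_le_self 2 (by omega)
    have h2 : ∀ m, 2 ≤ m → m + 2 ≤ 2 ^ m := by
      intro m hm
      induction m, hm using Nat.le_induction with
      | base => norm_num
      | succ m _ ih => rw [pow_succ]; omega
    have h3 : 2 ≤ Nat.log 2 n := (Nat.le_log_iff_pow_le (by omega) (by omega)).2 (by omega)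
    have := h2 _ h3
    omega
  obtain ⟨s, hs, hsc⟩ := exists_good q n P D hD0 hPq hPn
  let m : List (ZMod q) → ℕ → Prop := fun x k => Mark S ℓ code Q (padded x) k
  let key : List (ZMod q) → ZMod N1 × ZMod M0 × ((range J0).powerset → ZMod (t + 1)) ×
      (Fin J → ZMod (2 * q)) × ZMod M2 := fun x =>
    (((Nat.count (m x) N : ℕ) : ZMod N1),
      ((∑ k ∈ range N, Nat.count (m x) k : ℕ) : ZMod M0),
      (fun A => ((((range N).filter (fun k => Nat.count (m x) k % J0 ∈ A.1)).card : ℕ) :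
        ZMod (t + 1))),
      (fun ρ => ((∑ k ∈ (range N).filter (fun k => k % J = ρ), lag D (padded x) k : ℕ) :
        ZMod (2 * q))),
      ((∑ k ∈ range N, q ^ (k % J) * (k * lag D (padded x) k) : ℕ) : ZMod M2))
  obtain ⟨y, hy⟩ := pigeon s key
  refine ⟨s.filter (fun x => key x = y), ?_, ?_, ?_⟩
  · exact fun x hx => (hs x (Finset.mem_filter.1 hx).1).1
  · intro x hx z hz hne v hvx hvz
    -- by symmetry the deletion site in `x` may be taken to be the left one
    have main : ∀ x ∈ s.filter (fun x => key x = y), ∀ z ∈ s.filter (fun x => key x = y),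
        ∀ i j τ, i ≤ j → 1 ≤ τ → τ ≤ t → i + τ ≤ n → j + τ ≤ n →
        x.take i ++ x.drop (i + τ) = z.take j ++ z.drop (j + τ) → x = z := by
      intro x hx z hz i j τ hij hτ hτt hi hj he
      obtain ⟨hxs, hxy⟩ := Finset.mem_filter.1 hx
      obtain ⟨hzs, hzy⟩ := Finset.mem_filter.1 hz
      obtain ⟨hxl, _⟩ := hs x hxs
      obtain ⟨hzl, hzg⟩ := hs z hzs
      obtain ⟨d1, d2, d3⟩ := shift_of_eq hxl hzl i j τ hij hi hj he
      have hk : key x = key z := hxy.trans hzy.symm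
      simp only [key, Prod.mk.injEq] at hk
      obtain ⟨k1, k2, k3, k4, k5⟩ := hk
      apply padded_injective (hxl.trans hzl.symm)
      exact conflict_eq hS hcode hQ hD hD0 hℓ hr n P N w C1 N1 M0 J0 R1 L T J M2 hw hC hN1 hM0 hJ0
        hN hR1 hL hT hJ (by rw [hM2, hc1, hc2, ← add_assoc, ← add_assoc]; exact Nat.lt_succ_self _)
        (m x) (m z) (padded x) (padded z) (fun _ => Iff.rfl) (fun _ => Iff.rfl)
        (fun k hk => padded_out x k (by rwa [hxl])) (fun k hk => padded_out z k (by rwa [hzl]))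
        hzg ((ZMod.natCast_eq_natCast_iff _ _ _).1 k1) ((ZMod.natCast_eq_natCast_iff _ _ _).1 k2)
        (fun A hA => (ZMod.natCast_eq_natCast_iff _ _ _).1
          (congrFun k3 ⟨A, Finset.mem_powerset.2 hA⟩))
        (fun ρ hρ => (ZMod.natCast_eq_natCast_iff _ _ _).1 (congrFun k4 ⟨ρ, hρ⟩))
        ((ZMod.natCast_eq_natCast_iff _ _ _).1 k5) i j τ hij hτ hτt hj d1 d2 d3
    have hxl := (hs x (Finset.mem_filter.1 hx).1).1
    have hzl := (hs z (Finset.mem_filter.1 hz).1).1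
    obtain ⟨i, j, τ, hτ, hτt, hi, hj, he⟩ := conflict_of_ball hxl hzl hvx hvz hne
    rcases le_total i j with hij | hij
    · exact hne (main x hx z hz i j τ hij hτ hτt hi hj he)
    · exact hne (main z hz x hx j i τ hij hτ hτt hj hi he.symm).symm
  · have hcard : Fintype.card (ZMod N1 × ZMod M0 × ((range J0).powerset → ZMod (t + 1)) ×
        (Fin J → ZMod (2 * q)) × ZMod M2) = N1 * (M0 * (kA * (kB * M2))) := by
      simp only [Fintype.card_prod, ZMod.card, Fintype.card_fun, Fintype.card_coe,
        Finset.card_powerset, Finset.card_range, Fintype.card_fin, hkA, hkB]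
    rw [hcard] at hy
    have b1 : M0 ≤ (3 * w * (1 + r) + 1) * n := by
      rw [hM0, hN]
      have : r ≤ r * n := Nat.le_mul_of_pos_right _ (by omega)
      calc 3 * w * (n + r) + 1 ≤ 3 * w * (n + r * n) + n := by gcongr; omega
        _ = _ := by ring
    have b2 : M2 ≤ ((c1 + 3) * c2 + 1) * Nat.log 2 n := by
      rw [hM2, hP]
      have : c1 + 2 ≤ (c1 + 2) * Nat.log 2 n := Nat.le_mul_of_pos_right _ hlog1
      calc (Nat.log 2 n + 2 + c1) * c2 + 1 ≤ (Nat.log 2 n + (c1 + 2) * Nat.log 2 n) * c2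
              + Nat.log 2 n := by gcongr ?_ * c2 + ?_ ; omega
        _ = _ := by ring
    calc q ^ n ≤ 2 * s.card := hsc
      _ ≤ 2 * (N1 * (M0 * (kA * (kB * M2))) * (s.filter (fun x => key x = y)).card) := by omega
      _ ≤ 2 * (N1 * ((3 * w * (1 + r) + 1) * n * (kA * (kB * (((c1 + 3) * c2 + 1) * Nat.log 2 n))))
          * (s.filter (fun x => key x = y)).card) := by gcongr
      _ = _ := by ring

end BurstCode

/-! ### The redundancy -/

theorem stmt13 (q t : ℕ) (hq : 2 ≤ q) (ht : 2 ≤ t)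
    (hcase : t < q ∨ (q % 2 = 0 ∧ t < 2 * q)) :
    ∃ K : ℝ, ∃ n₀ : ℕ, ∀ n : ℕ, n₀ ≤ n →
      ∃ C : Finset (List (ZMod q)), C.Nonempty ∧
        (∀ x ∈ C, x.length = n) ∧
        (∀ x ∈ C, ∀ z ∈ C, x ≠ z → ∀ w, w ∈ ballLE t x → w ∉ ballLE t z) ∧
        Real.logb 2 ((q : ℝ) ^ n / (C.card : ℝ)) ≤
          Real.logb 2 (n : ℝ) + ((t : ℝ) - 1) * Real.logb 2 (Real.logb 2 (n : ℝ)) + K := by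
  obtain ⟨c, hc, h⟩ := BurstCode.exists_code q t hq ht
  refine ⟨Real.logb 2 c, 4, fun n hn => ?_⟩
  obtain ⟨C, hlen, hball, hsize⟩ := h n hn
  have hqn : 0 < q ^ n := Nat.pow_pos (by omega)
  have hC0 : 0 < C.card := by
    rcases Nat.eq_zero_or_pos C.card with h0 | h0
    · rw [h0, mul_zero] at hsize; omega
    · exact h0
  refine ⟨C, Finset.card_pos.1 hC0, hlen, hball, ?_⟩
  have hn0 : (0 : ℝ) < n := by exact_mod_cast (by omega : 0 < n)
  have hc0 : (0 : ℝ) < c := by exact_mod_cast hc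
  have hCr : (0 : ℝ) < C.card := by exact_mod_cast hC0
  have hqr : (0 : ℝ) < (q : ℝ) ^ n := by exact_mod_cast hqn
  have hl1 : (1 : ℝ) ≤ Real.logb 2 n := by
    rw [Real.le_logb_iff_rpow_le (by norm_num) hn0]
    have : (4 : ℝ) ≤ n := by exact_mod_cast hn
    norm_num; linarith
  have hl0 : (0 : ℝ) < Real.logb 2 n := by linarith
  have hnat : ((Nat.log 2 n : ℕ) : ℝ) ≤ Real.logb 2 n := by
    exact_mod_cast Real.natLog_le_logb n 2
  have hsize' : (q : ℝ) ^ n ≤ c * n * Real.logb 2 n * C.card := by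
    have : (q : ℝ) ^ n ≤ c * n * (Nat.log 2 n : ℕ) * C.card := by exact_mod_cast hsize
    refine this.trans ?_
    gcongr
  have h1 : Real.logb 2 ((q : ℝ) ^ n / C.card) ≤ Real.logb 2 (c * n * Real.logb 2 n) := by
    apply Real.logb_le_logb_of_le (by norm_num) (by positivity)
    rwa [div_le_iff₀ hCr]
  rw [Real.logb_mul (by positivity) hl0.ne', Real.logb_mul hc0.ne' hn0.ne'] at h1
  have h2 : 0 ≤ Real.logb 2 (Real.logb 2 (n : ℝ)) := Real.logb_nonneg (by norm_num) hl1
  have h3 : (1 : ℝ) * Real.logb 2 (Real.logb 2 (n : ℝ)) ≤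
      ((t : ℝ) - 1) * Real.logb 2 (Real.logb 2 (n : ℝ)) := by
    apply mul_le_mul_of_nonneg_right _ h2
    have : (2 : ℝ) ≤ t := by exact_mod_cast ht
    linarith
  linarith
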